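/- The R-linear map U^{≥0} ⊗_R U^{<0} → U induced by multiplication (x ⊗ y ↦ x·y) is bijective, i.e. multiplication induces an isomorphism of R-modules from U^{≥0} ⊗_R U^{<0} onto U. -/

import Mathlib

open scoped TensorProduct

noncomputable section

/-- The base ring `R = ℂ[[ℏ]]`. -/
abbrev R : Type := PowerSeries ℂ

/-- The formal variable `ℏ ∈ ℂ[[ℏ]]`. -/
def hbar : R := PowerSeries.X

/-- The generators `e_n` of the free algebra. -/
def E (n : ℤ) : FreeAlgebra R ℤ := FreeAlgebra.ι R n

/-- The defining relations of `U_ℏ𝔫₊`: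
`e_{m+1}e_n − e_n e_{m+1} − e_m e_{n+1} + e_{n+1}e_m = ℏ(e_m e_n + e_n e_m)`. -/
inductive ERel : FreeAlgebra R ℤ → FreeAlgebra R ℤ → Prop
  | current (m n : ℤ) :
      ERel (E (m + 1) * E n - E n * E (m + 1) - E m * E (n + 1) + E (n + 1) * E m)
        (hbar • (E m * E n + E n * E m))

/-- `U = U_ℏ𝔫₊`, the quotient of the free `R`-algebra on the `e_n`, `n ∈ ℤ`,
by the two-sided ideal generated by the defining relations. -/
abbrev U : Type := RingQuot ERel

/-- The image of `e_n` in `U`. -/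
def e (n : ℤ) : U := RingQuot.mkAlgHom R ERel (E n)

/-- `U^{≥0}`, the `R`-subalgebra of `U` generated by the `e_n` with `n ≥ 0`. -/
def Uge : Subalgebra R U := Algebra.adjoin R (Set.range fun n : ℕ => e (n : ℤ))

/-- `U^{<0}`, the `R`-subalgebra of `U` generated by the `e_n` with `n < 0`. -/
def Ult : Subalgebra R U := Algebra.adjoin R {x : U | ∃ n : ℤ, n < 0 ∧ x = e n}

/-!
The ordered monomials `e n₁ ⋯ e nₖ`, `n₁ ≥ ⋯ ≥ nₖ`, are a basis of `U`, those with letters in an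
interval `J` are a basis of the subalgebra generated by these letters, and cutting an ordered
monomial at `0` is a bijection.

The ordered monomials span because the relation rewrites the commutator of two letters as a
combination of products of two letters lying between them, with a smaller sum of indices.

For their independence, let `U` act on functions of finite subsets of `ℂˣ` by shuffle products with
`z ↦ zⁿ`, and apply the ordered monomials to the vacuum. Independence may be tested modulo `ℏ`.
There the monomials commute and a polynomial in them is sent to the values at the origin of its
iterated derivatives along the vectors `(zⁿ)ₙ`. These values determine the polynomial, because
distinct powers of `z` are linearly independent.
-/

section OrderedMonomials

theorem multiset_add_injective_of_mem_of_mem_compl {α : Type*} (s : Set α) :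
    Function.Injective fun p :
      {m : Multiset α // ∀ a ∈ m, a ∈ s} × {m : Multiset α // ∀ a ∈ m, a ∈ sᶜ} ↦ p.1.1 + p.2.1 := by
  classical
  have filter_mem (p : {m : Multiset α // ∀ a ∈ m, a ∈ s} × {m : Multiset α // ∀ a ∈ m, a ∈ sᶜ}) :
      (p.1.1 + p.2.1).filter (· ∈ s) = p.1.1 := by
    rw [Multiset.filter_add, Multiset.filter_eq_self.2 p.1.2, Multiset.filter_eq_nil.2 p.2.2,
      add_zero]
  intro p q (hpq : p.1.1 + p.2.1 = q.1.1 + q.2.1)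
  have fst_eq : p.1.1 = q.1.1 := by rw [← filter_mem p, hpq, filter_mem q]
  exact Prod.ext (Subtype.ext fst_eq) (Subtype.ext (by simpa [fst_eq] using hpq))

variable {ι A B : Type*} [LinearOrder ι] [CommRing A] [Ring B] [Algebra A B]

/-- The ordered (PBW) monomial `x i₁ ⋯ x iₖ` with `{i₁, …, iₖ} = m` and `i₁ ≥ ⋯ ≥ iₖ`. -/
def orderedMonomial {M : Type*} [Monoid M] (x : ι → M) (m : Multiset ι) : M :=
  ((m.sort (· ≥ ·)).map x).prod

variable (A) in
/-- The span of the ordered monomials all of whose letters lie in `J`. -/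
def orderedSpan (x : ι → B) (J : Set ι) : Submodule A B :=
  Submodule.span A (Set.range fun m : {m : Multiset ι // ∀ i ∈ m, i ∈ J} ↦ orderedMonomial x m.1)

theorem orderedMonomial_mem_orderedSpan (x : ι → B) {J : Set ι} {m : Multiset ι}
    (hm : ∀ i ∈ m, i ∈ J) : orderedMonomial x m ∈ orderedSpan A x J :=
  Submodule.subset_span ⟨⟨m, hm⟩, rfl⟩

theorem orderedSpan_mono (x : ι → B) {J J' : Set ι} (h : J ⊆ J') :
    orderedSpan A x J ≤ orderedSpan A x J' :=
  Submodule.span_le.2 <| Set.range_subset_iff.2 fun m ↦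
    orderedMonomial_mem_orderedSpan x fun i hi ↦ h (m.2 i hi)

theorem orderedMonomial_add {M : Type*} [Monoid M] (x : ι → M) {a b : Multiset ι}
    (h : ∀ i ∈ a, ∀ j ∈ b, j ≤ i) :
    orderedMonomial x (a + b) = orderedMonomial x a * orderedMonomial x b := by
  have sort_add : (a + b).sort (· ≥ ·) = a.sort (· ≥ ·) ++ b.sort (· ≥ ·) := by
    refine List.Perm.eq_of_pairwise' (Multiset.pairwise_sort _ _) ?_ ?_
    · simpa [List.pairwise_append] using h
    · simp [← Multiset.coe_eq_coe, ← Multiset.coe_add]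
  rw [orderedMonomial, sort_add, List.map_append, List.prod_append, orderedMonomial,
    orderedMonomial]

theorem orderedMonomial_eq_prod {M : Type*} [CommMonoid M] (x : ι → M) (m : Multiset ι) :
    orderedMonomial x m = (m.map x).prod := by
  rw [orderedMonomial, ← Multiset.prod_coe, ← Multiset.map_coe, Multiset.sort_eq]

theorem mulMap_orderedSpan_injective {x : ι → B} (hx : LinearIndependent A (orderedMonomial x))
    {s : Set ι} (hs : IsUpperSet s) :
    Function.Injective (Submodule.mulMap (orderedSpan A x s) (orderedSpan A x sᶜ)) := by
  have linInd (J : Set ι) : LinearIndependent A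
      fun m : {m : Multiset ι // ∀ i ∈ m, i ∈ J} ↦ orderedMonomial x m.1 :=
    hx.comp _ Subtype.val_injective
  refine (Submodule.LinearDisjoint.of_basis_mul _ _
    (.span (linInd s)) (.span (linInd sᶜ)) ?_).injective
  convert hx.comp _ (multiset_add_injective_of_mem_of_mem_compl s) with p
  simp only [Module.Basis.span_apply, Function.comp_apply]
  exact (orderedMonomial_add x fun i hi j hj ↦
    le_of_not_ge fun hij ↦ p.2.2 j hj (hs hij (p.1.2 i hi))).symm

theorem orderedSpan_univ_le_mul (x : ι → B) {s : Set ι} (hs : IsUpperSet s) :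
    orderedSpan A x Set.univ ≤ orderedSpan A x s * orderedSpan A x sᶜ := by
  classical
  refine Submodule.span_le.2 <| Set.range_subset_iff.2 fun m ↦ ?_
  have left_mem : ∀ i ∈ m.1.filter (· ∈ s), i ∈ s := fun i hi ↦ (Multiset.mem_filter.1 hi).2
  have right_mem : ∀ i ∈ m.1.filter (· ∉ s), i ∈ sᶜ := fun i hi ↦ (Multiset.mem_filter.1 hi).2
  have factorization := orderedMonomial_add x fun i hi j hj ↦
    le_of_not_ge fun hij ↦ right_mem j hj (hs hij (left_mem i hi))
  rw [Multiset.filter_add_not] at factorization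
  exact factorization ▸ Submodule.mul_mem_mul (orderedMonomial_mem_orderedSpan x left_mem)
    (orderedMonomial_mem_orderedSpan x right_mem)

end OrderedMonomials

section Straightening

variable {A B : Type*} [CommRing A] [Ring B] [Algebra A B] {h : A} {x : ℤ → B}

/-- The mode form of the current relation `(z - w - h) x(z) x(w) = (z - w + h) x(w) x(z)` for the
generating series `x(z) = ∑ x n z⁻ⁿ⁻¹`. -/
def CurrentRelation (h : A) (x : ℤ → B) : Prop :=
  ∀ m n : ℤ, x (m + 1) * x n - x n * x (m + 1) - x m * x (n + 1) + x (n + 1) * x m =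
    h • (x m * x n + x n * x m)

variable (A) in
/-- The span of the words of length `k` in the letters `x i`, `i ∈ J`, whose indices add up to
less than `d`: the error terms of the straightening procedure. -/
def lowerSpan (x : ℤ → B) (J : Set ℤ) (k : ℕ) (d : ℤ) : Submodule A B :=
  Submodule.span A ((fun l ↦ (l.map x).prod) ''
    {l : List ℤ | l.length = k ∧ l.sum < d ∧ ∀ i ∈ l, i ∈ J})

theorem mul_mem_lowerSpan_two {J : Set ℤ} {d i j : ℤ} (hi : i ∈ J) (hj : j ∈ J) (hd : i + j < d) :
    x i * x j ∈ lowerSpan A x J 2 d :=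
  Submodule.subset_span ⟨[i, j], by simp [*], by simp⟩

theorem lowerSpan_mono {J J' : Set ℤ} {k : ℕ} {d d' : ℤ} (hJ : J ⊆ J') (hd : d ≤ d') :
    lowerSpan A x J k d ≤ lowerSpan A x J' k d' :=
  Submodule.span_mono <| Set.image_mono fun _ hl ↦
    ⟨hl.1, hl.2.1.trans_le hd, fun i hi ↦ hJ (hl.2.2 i hi)⟩

theorem mul_mem_lowerSpan {J : Set ℤ} {k : ℕ} {d i : ℤ} (hi : i ∈ J) {u : B}
    (hu : u ∈ lowerSpan A x J k d) : x i * u ∈ lowerSpan A x J (k + 1) (i + d) := by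
  suffices (lowerSpan A x J k d).map (LinearMap.mulLeft A (x i)) ≤
      lowerSpan A x J (k + 1) (i + d) from this ⟨u, hu, rfl⟩
  refine (Submodule.map_span_le _ _ _).2 ?_
  rintro _ ⟨l, ⟨hk, hd, hl⟩, rfl⟩
  exact Submodule.subset_span ⟨i :: l, ⟨by simp [hk], by simpa using hd, by simp_all⟩, by simp⟩

theorem mul_prod_mem_lowerSpan {J : Set ℤ} {k : ℕ} {d : ℤ} {r : List ℤ} (hr : ∀ i ∈ r, i ∈ J)
    {u : B} (hu : u ∈ lowerSpan A x J k d) :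
    u * (r.map x).prod ∈ lowerSpan A x J (k + r.length) (d + r.sum) := by
  suffices (lowerSpan A x J k d).map (LinearMap.mulRight A (r.map x).prod) ≤
      lowerSpan A x J (k + r.length) (d + r.sum) from this ⟨u, hu, rfl⟩
  refine (Submodule.map_span_le _ _ _).2 ?_
  rintro _ ⟨l, ⟨hk, hd, hl⟩, rfl⟩
  refine Submodule.subset_span ⟨l ++ r, ⟨by simp [hk], by simpa using hd, ?_⟩, by simp⟩
  simpa [or_imp, forall_and] using ⟨hl, hr⟩

/-- The relation trades the commutator of `x (b + k + 2)` and `x b` for that of `x (b + k + 1)`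
and `x (b + 1)`; for odd `k` the recursion ends with twice the commutator of two adjacent letters,
whence `h2`. -/
theorem CurrentRelation.commutator_mem_lowerSpan_Icc (hx : CurrentRelation h x)
    (h2 : IsUnit (2 : A)) (k : ℕ) (b : ℤ) :
    x (b + k) * x b - x b * x (b + k) ∈ lowerSpan A x (Set.Icc b (b + k)) 2 (b + k + b) := by
  induction k using Nat.twoStepInduction generalizing b with
  | zero => simp
  | one =>
    have two_smul_eq : (2 : A) • (x (b + 1) * x b - x b * x (b + 1)) =
        h • (x b * x b + x b * x b) := by
      rw [← hx b b, two_smul]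
      abel
    have hb : x b * x b ∈ lowerSpan A x (Set.Icc b (b + 1)) 2 (b + 1 + b) :=
      mul_mem_lowerSpan_two (by simp) (by simp) (by lia)
    rw [← Submodule.smul_mem_iff_of_isUnit _ h2]
    simpa only [Nat.cast_one, two_smul_eq] using Submodule.smul_mem _ h (add_mem hb hb)
  | more k ih _ =>
    have commutator_eq : x (b + k + 1 + 1) * x b - x b * x (b + k + 1 + 1) =
        (x (b + 1 + k) * x (b + 1) - x (b + 1) * x (b + 1 + k)) +
          h • (x (b + k + 1) * x b + x b * x (b + k + 1)) := by
      rw [← hx (b + k + 1) b, add_right_comm b 1]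
      abel
    push_cast
    rw [← one_add_one_eq_two, ← add_assoc, ← add_assoc, commutator_eq]
    refine add_mem (lowerSpan_mono (Set.Icc_subset_Icc ?_ ?_) ?_ (ih (b + 1)))
      (Submodule.smul_mem _ h (add_mem ?_ ?_))
    · lia
    · lia
    · lia
    · exact mul_mem_lowerSpan_two ⟨by lia, by lia⟩ ⟨by lia, by lia⟩ (by lia)
    · exact mul_mem_lowerSpan_two ⟨by lia, by lia⟩ ⟨by lia, by lia⟩ (by lia)

theorem CurrentRelation.commutator_mem_lowerSpan (hx : CurrentRelation h x) (h2 : IsUnit (2 : A))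
    {J : Set ℤ} (hJ : J.OrdConnected) {i j : ℤ} (hi : i ∈ J) (hj : j ∈ J) :
    x i * x j - x j * x i ∈ lowerSpan A x J 2 (i + j) := by
  wlog hij : j ≤ i generalizing i j
  · rw [← neg_mem_iff, neg_sub, add_comm i]
    exact this hj hi (le_of_not_ge hij)
  obtain ⟨k, rfl⟩ := Int.le.dest hij
  exact lowerSpan_mono (hJ.out hj hi) le_rfl (hx.commutator_mem_lowerSpan_Icc h2 k j)

theorem CurrentRelation.prod_sub_prod_mem_lowerSpan (hx : CurrentRelation h x)
    (h2 : IsUnit (2 : A)) {J : Set ℤ} (hJ : J.OrdConnected) {l l' : List ℤ} (hperm : l.Perm l')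
    (hl : ∀ i ∈ l, i ∈ J) :
    (l.map x).prod - (l'.map x).prod ∈ lowerSpan A x J l.length l.sum := by
  induction hperm with
  | nil => simp
  | cons i _ ih =>
    rw [List.forall_mem_cons] at hl
    simpa [mul_sub] using mul_mem_lowerSpan hl.1 (ih hl.2)
  | swap j i l =>
    simp only [List.forall_mem_cons] at hl
    have swap_mem := mul_prod_mem_lowerSpan hl.2.2 (hx.commutator_mem_lowerSpan h2 hJ hl.1 hl.2.1)
    simpa [sub_mul, mul_assoc, add_assoc, add_comm 2] using swap_mem
  | trans hperm₁ _ ih₁ ih₂ =>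
    have hmem₂ := ih₂ fun i hi ↦ hl i (hperm₁.mem_iff.2 hi)
    rw [← hperm₁.length_eq, ← hperm₁.sum_eq] at hmem₂
    simpa using add_mem (ih₁ hl) hmem₂

/-- Straightening terminates because the sum of `k` letters that are at least `c` is at least
`k * c`. -/
theorem CurrentRelation.prod_mem_orderedSpan_of_mem_lowerBounds (hx : CurrentRelation h x)
    (h2 : IsUnit (2 : A)) {J : Set ℤ} (hJ : J.OrdConnected) {c : ℤ} (hc : c ∈ lowerBounds J)
    (l : List ℤ) (hl : ∀ i ∈ l, i ∈ J) : (l.map x).prod ∈ orderedSpan A x J := by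
  induction hN : (l.sum - l.length • c).toNat using Nat.strong_induction_on generalizing l with
  | _ N ih =>
    subst hN
    have hperm : l.Perm ((l : Multiset ℤ).sort (· ≥ ·)) :=
      Multiset.coe_eq_coe.1 (Multiset.sort_eq _ _).symm
    have lower_le : lowerSpan A x J l.length l.sum ≤ orderedSpan A x J := by
      refine Submodule.span_le.2 ?_
      rintro _ ⟨v, ⟨hlen, hsum, hv⟩, rfl⟩
      have card_nsmul_le := List.card_nsmul_le_sum v c fun i hi ↦ hc (hv i hi)
      exact ih _ (by rw [hlen] at *; lia) v hv rfl
    have sorted_mem : orderedMonomial x (l : Multiset ℤ) ∈ orderedSpan A x J :=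
      orderedMonomial_mem_orderedSpan x (by simpa using hl)
    simpa [orderedMonomial] using
      add_mem (lower_le (hx.prod_sub_prod_mem_lowerSpan h2 hJ hperm hl)) sorted_mem

theorem CurrentRelation.prod_mem_orderedSpan (hx : CurrentRelation h x) (h2 : IsUnit (2 : A))
    {J : Set ℤ} (hJ : J.OrdConnected) (l : List ℤ) (hl : ∀ i ∈ l, i ∈ J) :
    (l.map x).prod ∈ orderedSpan A x J := by
  obtain ⟨c, hc⟩ := l.toFinset.bddBelow
  refine orderedSpan_mono x (Set.inter_subset_left (t := Set.Ici c)) ?_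
  exact hx.prod_mem_orderedSpan_of_mem_lowerBounds h2 (hJ.inter Set.ordConnected_Ici)
    (fun i hi ↦ hi.2) l fun i hi ↦ ⟨hl i hi, hc (by simpa using hi)⟩

theorem CurrentRelation.toSubmodule_adjoin_image (hx : CurrentRelation h x) (h2 : IsUnit (2 : A))
    {J : Set ℤ} (hJ : J.OrdConnected) :
    Subalgebra.toSubmodule (Algebra.adjoin A (x '' J)) = orderedSpan A x J := by
  apply le_antisymm
  · rw [Algebra.adjoin_eq_span, Submodule.span_le]
    intro b hb
    obtain ⟨l, hl, rfl⟩ := Submonoid.exists_list_of_mem_closure hb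
    obtain ⟨l, rfl⟩ : l ∈ Set.range (List.map fun j : J ↦ x j) := by
      rw [Set.range_list_map, ← Set.image_eq_range]
      exact hl
    simpa using hx.prod_mem_orderedSpan h2 hJ (l.map (↑)) (by simp +contextual)
  · refine Submodule.span_le.2 <| Set.range_subset_iff.2 fun ⟨m, hm⟩ ↦ ?_
    refine Subalgebra.list_prod_mem _ ?_
    simp only [List.forall_mem_map, Multiset.mem_sort]
    exact fun i hi ↦ Algebra.subset_adjoin ⟨i, hm i hi, rfl⟩

end Straightening

section CreationOperators

theorem sum_sum_erase_add_swap_mul_eq_zero {ι A : Type*} [DecidableEq ι] [NonUnitalNonAssocRing A]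
    (S : Finset ι) (a κ : ι → ι → A) (hκ : ∀ z w, z ≠ w → κ w z = -κ z w) :
    ∑ z ∈ S, ∑ w ∈ S.erase z, (a z w + a w z) * κ z w = 0 := by
  have sum_swap : ∑ z ∈ S, ∑ w ∈ S.erase z, a w z * κ z w =
      ∑ z ∈ S, ∑ w ∈ S.erase z, a z w * κ w z :=
    Finset.sum_comm' fun z w ↦ by simp only [Finset.mem_erase]; tauto
  simp only [add_mul, Finset.sum_add_distrib]
  rw [sum_swap]
  simp only [← Finset.sum_add_distrib]
  refine Finset.sum_eq_zero fun z _ ↦ Finset.sum_eq_zero fun w hw ↦ ?_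
  rw [hκ z w (Finset.ne_of_mem_erase hw).symm, mul_neg, add_neg_cancel]

open scoped Classical in
/-- The vacuum vector of the Fock space of functions on finite sets of units: the indicator function
of the empty set. -/
def vacuum (K A : Type*) [Monoid K] [Semiring A] : Finset Kˣ → A :=
  Pi.single ∅ 1

variable {K A : Type*} [Field K] [CommRing A] [Algebra K A]

/-- The interaction factor `1 + h / (z - w)` of two distinct points. -/
def interaction (h : A) (z w : Kˣ) : A :=
  1 + algebraMap K A (z - w : K)⁻¹ * h

open scoped Classical in
/-- The shuffle product with the function `z ↦ zⁿ` of a single point, an operator on the Fock space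
realizing the mode `n` of the current. -/
def creation (h : A) (n : ℤ) : Module.End A (Finset Kˣ → A) :=
  LinearMap.pi fun S ↦ ∑ z ∈ S,
    (algebraMap K A ↑(z ^ n) * ∏ w ∈ S.erase z, interaction h z w) • LinearMap.proj (S.erase z)

open scoped Classical in
theorem creation_apply (h : A) (n : ℤ) (F : Finset Kˣ → A) (S : Finset Kˣ) :
    creation h n F S = ∑ z ∈ S,
      algebraMap K A ↑(z ^ n) * (∏ w ∈ S.erase z, interaction h z w) * F (S.erase z) := by
  simp [creation]

open scoped Classical in
theorem creation_mul_apply (h : A) (m n : ℤ) (F : Finset Kˣ → A) (S : Finset Kˣ) :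
    (creation h m * creation h n : Module.End A (Finset Kˣ → A)) F S = ∑ z ∈ S, ∑ w ∈ S.erase z,
      algebraMap K A ↑(z ^ m) * algebraMap K A ↑(w ^ n) * interaction h z w *
        ((∏ u ∈ (S.erase z).erase w, interaction h z u * interaction h w u) *
          F ((S.erase z).erase w)) := by
  simp only [Module.End.mul_apply, creation_apply, Finset.mul_sum]
  refine Finset.sum_congr rfl fun z _ ↦ Finset.sum_congr rfl fun w hw ↦ ?_
  rw [← Finset.mul_prod_erase _ _ hw, Finset.prod_mul_distrib]
  ring

theorem sub_sub_mul_interaction_swap (h : A) {z w : Kˣ} (hzw : z ≠ w) :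
    (algebraMap K A z - algebraMap K A w - h) * interaction h z w =
      -((algebraMap K A w - algebraMap K A z - h) * interaction h w z) := by
  have hne : (z - w : K) ≠ 0 := sub_ne_zero.2 (Units.val_injective.ne hzw)
  have inv_swap : (w - z : K)⁻¹ = -(z - w : K)⁻¹ := by rw [← inv_neg, neg_sub]
  have inv_mul : (algebraMap K A z - algebraMap K A w) * algebraMap K A (z - w : K)⁻¹ = 1 := by
    rw [← map_sub, ← map_mul, mul_inv_cancel₀ hne, map_one]
  rw [interaction, interaction, inv_swap, map_neg]
  linear_combination (2 * h) * inv_mul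

/-- The difference of the two sides is the sum over `z ≠ w` of `z ^ m w ^ n + w ^ m z ^ n` times a
factor that is antisymmetric by `sub_sub_mul_interaction_swap`. -/
theorem currentRelation_creation (h : A) :
    CurrentRelation h (creation h : ℤ → Module.End A (Finset Kˣ → A)) := by
  classical
  intro m n
  ext F S
  let G (z w : Kˣ) : A := (∏ u ∈ (S.erase z).erase w, interaction h z u * interaction h w u) *
    F ((S.erase z).erase w)
  have G_swap (z w : Kˣ) : G w z = G z w := by
    simp only [G, Finset.erase_right_comm (a := w), mul_comm (interaction h w _)]
  let κ (z w : Kˣ) : A := (algebraMap K A z - algebraMap K A w - h) * interaction h z w * G z w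
  have κ_swap (z w : Kˣ) (hzw : z ≠ w) : κ w z = -κ z w := by
    simp only [κ, G_swap, sub_sub_mul_interaction_swap h hzw, neg_mul, neg_neg]
  have map_zpow_succ (z : Kˣ) (k : ℤ) :
      algebraMap K A ↑(z ^ (k + 1)) = algebraMap K A z * algebraMap K A ↑(z ^ k) := by
    rw [zpow_add_one, Units.val_mul, map_mul, mul_comm]
  rw [← sub_eq_zero, ← sum_sum_erase_add_swap_mul_eq_zero S
    (fun z w ↦ algebraMap K A ↑(z ^ m) * algebraMap K A ↑(w ^ n)) κ κ_swap]
  simp only [LinearMap.sub_apply, LinearMap.add_apply, LinearMap.smul_apply, Pi.sub_apply,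
    Pi.add_apply, Pi.smul_apply, creation_mul_apply, smul_eq_mul, Finset.mul_sum,
    ← Finset.sum_add_distrib, ← Finset.sum_sub_distrib]
  refine Finset.sum_congr rfl fun z _ ↦ Finset.sum_congr rfl fun w _ ↦ ?_
  simp only [κ, G, map_zpow_succ]
  ring

variable {A' : Type*} [CommRing A'] [Algebra K A']

theorem algHom_comp_creation (φ : A →ₐ[K] A') (h : A) (n : ℤ) (F : Finset Kˣ → A) :
    φ ∘ creation h n F = creation (φ h) n (φ ∘ F) := by
  funext S
  simp [creation_apply, interaction]

theorem algHom_comp_prod_creation_vacuum (φ : A →ₐ[K] A') (h : A) (l : List ℤ) :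
    φ ∘ (l.map (creation h)).prod (vacuum K A) =
      (l.map (creation (φ h))).prod (vacuum K A') := by
  induction l with
  | nil =>
    funext S
    simp [vacuum, Pi.single_apply, apply_ite φ]
  | cons n l ih =>
    simp only [List.map_cons, List.prod_cons, Module.End.mul_apply, algHom_comp_creation, ih]

end CreationOperators

section ClassicalLimit

theorem linearIndependent_zpow {K : Type*} [CommRing K] [IsDomain K] {S : Set Kˣ}
    (hS : S.Infinite) :
    LinearIndependent K fun (n : ℤ) (z : S) ↦ ((z ^ n : Kˣ) : K) := by
  refine linearIndependent_iff'.2 fun s g hg n hn ↦ ?_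
  let f : LaurentPolynomial K := ∑ m ∈ s, LaurentPolynomial.C (g m) * LaurentPolynomial.T m
  have eval_f (z : Kˣ) (hz : z ∈ S) : LaurentPolynomial.eval₂ (RingHom.id K) z f = 0 := by
    simpa [f, Finset.sum_apply] using congrFun hg ⟨z, hz⟩
  obtain ⟨N, p, hp⟩ := f.exists_T_pow
  have p_eq_zero : p = 0 := by
    refine Polynomial.eq_zero_of_infinite_isRoot p
      ((hS.image Units.val_injective.injOn).mono ?_)
    rintro _ ⟨z, hz, rfl⟩
    rw [Set.mem_ofPred_eq, Polynomial.IsRoot.def, Polynomial.eval,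
      ← LaurentPolynomial.eval₂_toLaurent, hp, map_mul, eval_f z hz, zero_mul]
  have f_eq_zero : f = 0 := by
    rwa [p_eq_zero, map_zero, eq_comm, (LaurentPolynomial.isUnit_T N).mul_left_eq_zero] at hp
  have coeff_f : f.coeff n = g n := by
    simp [f, ← LaurentPolynomial.single_eq_C_mul_T, Finsupp.single_apply, hn]
  rw [← coeff_f, f_eq_zero]
  rfl

open MvPolynomial

theorem mkDerivation_eq_sum_vars {σ k M : Type*} [CommRing k] [AddCommGroup M] [Module k M]
    [Module (MvPolynomial σ k) M] [IsScalarTower k (MvPolynomial σ k) M]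
    (f : σ → M) (P : MvPolynomial σ k) :
    mkDerivation k f P = ∑ i ∈ P.vars, pderiv i P • f i := by
  have sum_apply (Q : MvPolynomial σ k) :
      (∑ i ∈ P.vars, (LinearMap.toSpanSingleton _ _ (f i)).compDer (pderiv i)) Q =
        ∑ i ∈ P.vars, pderiv i Q • f i :=
    (congrFun (map_sum (Derivation.coeFnAddMonoidHom (R := k) (A := MvPolynomial σ k) (M := M))
      _ _) Q).trans (Finset.sum_apply _ _ _)
  rw [← sum_apply]
  refine derivation_eq_of_forall_mem_vars fun i hi ↦ ?_
  rw [sum_apply, mkDerivation_X, Finset.sum_eq_single_of_mem i hi fun j _ hj ↦ ?_, pderiv_X_self,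
    one_smul]
  rw [pderiv_X_of_ne hj.symm, zero_smul]

section PowerDerivation

variable {K : Type*} [CommRing K]

/-- The constant vector field on `Spec K[eₙ : n ∈ ℤ]` whose `n`-th component is `zⁿ`. -/
def powerDerivation (z : Kˣ) : Derivation K (MvPolynomial ℤ K) (MvPolynomial ℤ K) :=
  mkDerivation K fun n ↦ C ↑(z ^ n)

theorem powerDerivation_eq_sum_vars (z : Kˣ) (P : MvPolynomial ℤ K) :
    powerDerivation z P = ∑ n ∈ P.vars, ((z ^ n : Kˣ) : K) • pderiv n P := by
  simp only [powerDerivation, mkDerivation_eq_sum_vars, smul_eq_C_mul, smul_eq_mul, mul_comm]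

theorem powerDerivation_commute (z w : Kˣ) :
    Commute (powerDerivation z : Module.End K (MvPolynomial ℤ K)) (powerDerivation w) := by
  have bracket_eq_zero : ⁅powerDerivation z, powerDerivation w⁆ = 0 :=
    derivation_ext fun n ↦ by simp [Derivation.commutator_apply, powerDerivation]
  rw [commute_iff_lie_eq, ← Derivation.commutator_coe_linear_map, bracket_eq_zero]
  rfl

/-- The product of the commuting derivations `powerDerivation z`, `z ∈ S`. -/
def iteratedPowerDerivation (S : Finset Kˣ) : Module.End K (MvPolynomial ℤ K) :=
  S.noncommProd (fun z ↦ (powerDerivation z : Module.End K (MvPolynomial ℤ K)))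
    fun z _ w _ _ ↦ powerDerivation_commute z w

theorem iteratedPowerDerivation_empty :
    iteratedPowerDerivation (∅ : Finset Kˣ) = 1 :=
  Finset.noncommProd_empty _ _

theorem iteratedPowerDerivation_insert [DecidableEq Kˣ] {z : Kˣ} {S : Finset Kˣ} (hz : z ∉ S) :
    iteratedPowerDerivation (insert z S) = powerDerivation z * iteratedPowerDerivation S :=
  Finset.noncommProd_insert_of_notMem _ _ _ _ hz

theorem iteratedPowerDerivation_insert' [DecidableEq Kˣ] {z : Kˣ} {S : Finset Kˣ} (hz : z ∉ S) :
    iteratedPowerDerivation (insert z S) = iteratedPowerDerivation S * powerDerivation z :=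
  Finset.noncommProd_insert_of_notMem' _ _ _ _ hz

open scoped Classical in
theorem iteratedPowerDerivation_X_mul (n : ℤ) (P : MvPolynomial ℤ K) (S : Finset Kˣ) :
    iteratedPowerDerivation S (X n * P) = X n * iteratedPowerDerivation S P +
      ∑ z ∈ S, ((z ^ n : Kˣ) : K) • iteratedPowerDerivation (S.erase z) P := by
  induction S using Finset.induction_on with
  | empty => simp [iteratedPowerDerivation_empty]
  | insert w S hw ih =>
    have sum_eq :
        ∑ z ∈ S, ((z ^ n : Kˣ) : K) • iteratedPowerDerivation ((insert w S).erase z) P =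
          powerDerivation w
            (∑ z ∈ S, ((z ^ n : Kˣ) : K) • iteratedPowerDerivation (S.erase z) P) := by
      rw [map_sum]
      refine Finset.sum_congr rfl fun z hz ↦ ?_
      rw [Finset.erase_insert_of_ne (ne_of_mem_of_not_mem hz hw).symm,
        iteratedPowerDerivation_insert (by simp [hw]), Derivation.map_smul]
      rfl
    rw [Finset.sum_insert hw, Finset.erase_insert hw, sum_eq,
      iteratedPowerDerivation_insert hw, Module.End.mul_apply, Module.End.mul_apply, ih,
      Derivation.coeFn_coe, map_add, Derivation.leibniz]
    simp only [powerDerivation, mkDerivation_X, smul_eq_mul, MvPolynomial.smul_eq_C_mul]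
    ring

variable (K) in
/-- The values at the origin of the iterated derivatives of a polynomial along the curve
`z ↦ (zⁿ)ₙ`. -/
def taylor : MvPolynomial ℤ K →ₗ[K] (Finset Kˣ → K) :=
  LinearMap.pi fun S ↦ lcoeff K 0 ∘ₗ iteratedPowerDerivation S

theorem taylor_apply (P : MvPolynomial ℤ K) (S : Finset Kˣ) :
    taylor K P S = constantCoeff (iteratedPowerDerivation S P) :=
  rfl

theorem taylor_powerDerivation [DecidableEq Kˣ] (P : MvPolynomial ℤ K) {z : Kˣ} {S : Finset Kˣ}
    (hz : z ∉ S) : taylor K (powerDerivation z P) S = taylor K P (insert z S) := by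
  rw [taylor_apply, taylor_apply, iteratedPowerDerivation_insert' hz]
  rfl

theorem taylor_one : taylor K 1 = vacuum K K := by
  classical
  funext S
  obtain rfl | ⟨z, hz⟩ := S.eq_empty_or_nonempty
  · simp [taylor_apply, iteratedPowerDerivation_empty, vacuum]
  · rw [← Finset.insert_erase hz, ← taylor_powerDerivation _ (S.notMem_erase z),
      Derivation.map_one_eq_zero]
    simp [vacuum]

end PowerDerivation

variable {K : Type*} [Field K]

theorem taylor_X_mul (n : ℤ) (P : MvPolynomial ℤ K) :
    taylor K (X n * P) = creation (0 : K) n (taylor K P) := by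
  funext S
  rw [taylor_apply, iteratedPowerDerivation_X_mul]
  simp [creation_apply, interaction, taylor_apply, map_sum, smul_eq_C_mul]

theorem taylor_prod_X (l : List ℤ) :
    taylor K (l.map X).prod = (l.map (creation (0 : K))).prod (vacuum K K) := by
  induction l with
  | nil => exact taylor_one
  | cons n l ih =>
    rw [List.map_cons, List.prod_cons, taylor_X_mul, ih, List.map_cons, List.prod_cons,
      Module.End.mul_apply]

theorem taylor_pderiv_eq_zero [Infinite K] {P : MvPolynomial ℤ K} (hP : taylor K P = 0) (n : ℤ) :
    taylor K (pderiv n P) = 0 := by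
  classical
  by_cases hn : n ∈ P.vars
  swap
  · rw [pderiv_eq_zero_of_notMem_vars hn, map_zero]
  have : Infinite Kˣ :=
    unitsEquivNeZero.infinite_iff.2 (Set.finite_singleton (0 : K)).infinite_compl.to_subtype
  funext S
  have sum_eq_zero (z : Kˣ) (hz : z ∉ S) :
      ∑ n ∈ P.vars, taylor K (pderiv n P) S * ((z ^ n : Kˣ) : K) = 0 := by
    have insert_eq_zero := congrFun hP (insert z S)
    rw [← taylor_powerDerivation P hz, powerDerivation_eq_sum_vars, map_sum,
      Finset.sum_apply] at insert_eq_zero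
    simpa only [map_smul, Pi.smul_apply, smul_eq_mul, mul_comm, Pi.zero_apply] using insert_eq_zero
  have linInd := linearIndependent_zpow S.finite_toSet.infinite_compl
  refine linearIndependent_iff'.1 linInd P.vars (fun n ↦ taylor K (pderiv n P) S) ?_ n hn
  refine funext fun z ↦ ?_
  rw [Finset.sum_apply]
  exact sum_eq_zero z z.2

theorem taylor_injective [CharZero K] : Function.Injective (taylor K) := by
  rw [injective_iff_map_eq_zero]
  intro P hP
  ext m
  obtain ⟨m, rfl⟩ := Multiset.toFinsupp.surjective m
  induction m using Multiset.induction_on generalizing P with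
  | empty =>
    simpa [taylor_apply, iteratedPowerDerivation_empty, constantCoeff_eq] using congrFun hP ∅
  | cons n m ih =>
    have coeff_mul_eq_zero := ih _ (taylor_pderiv_eq_zero hP n)
    rw [coeff_pderiv] at coeff_mul_eq_zero
    rw [← Multiset.singleton_add, map_add, Multiset.toFinsupp_singleton, add_comm]
    exact (mul_eq_zero.1 coeff_mul_eq_zero).resolve_right (Nat.cast_add_one_ne_zero _)

theorem linearIndependent_orderedMonomial_creation_zero [CharZero K] :
    LinearIndependent K fun m ↦ orderedMonomial (creation (0 : K)) m (vacuum K K) := by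
  have monomials := (basisMonomials ℤ K).linearIndependent.comp _ Multiset.toFinsupp.injective
  have taylor_monomial (m : Multiset ℤ) :
      taylor K (basisMonomials ℤ K (Multiset.toFinsupp m)) =
        orderedMonomial (creation (0 : K)) m (vacuum K K) := by
    rw [orderedMonomial, ← taylor_prod_X, ← orderedMonomial, orderedMonomial_eq_prod,
      Finset.prod_multiset_map_count]
    simp [monomial_eq, Finsupp.prod]
  simp only [← taylor_monomial]
  exact monomials.map' (taylor K) (LinearMap.ker_eq_bot.2 taylor_injective)

end ClassicalLimit

section Deformation

open PowerSeries

theorem exists_eq_X_smul_of_constantCoeff_eq_zero {ι k : Type*} [CommRing k] {c : ι →₀ k⟦X⟧}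
    (hc : ∀ i, constantCoeff (c i) = 0) : ∃ c' : ι →₀ k⟦X⟧, c = (X : k⟦X⟧) • c' := by
  have shift_zero : (mk fun n ↦ coeff (n + 1) (0 : k⟦X⟧)) = 0 := by ext; simp
  refine ⟨c.mapRange (fun f ↦ mk fun n ↦ coeff (n + 1) f) shift_zero, Finsupp.ext fun i ↦ ?_⟩
  simpa [hc i] using sub_const_eq_X_mul_shift (c i)

/-- Dividing a relation by `X` as often as possible leaves a relation whose reduction modulo `X` is
nontrivial. -/
theorem linearIndependent_of_constantCoeff {ι k M N : Type*} [CommRing k] [AddCommGroup M]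
    [Module k⟦X⟧ M] [AddCommGroup N] [Module k N] (hX : IsSMulRegular M (X : k⟦X⟧))
    (φ : M →ₛₗ[constantCoeff (R := k)] N) {v : ι → M} (hv : LinearIndependent k (φ ∘ v)) :
    LinearIndependent k⟦X⟧ v := by
  have constantCoeff_eq_zero (c : ι →₀ k⟦X⟧) (hc : Finsupp.linearCombination k⟦X⟧ v c = 0)
      (i : ι) : constantCoeff (c i) = 0 := by
    have reduction_eq_zero := congrArg φ hc
    rw [map_zero, Finsupp.linearCombination_apply, Finsupp.sum, map_sum] at reduction_eq_zero
    simp only [map_smulₛₗ] at reduction_eq_zero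
    by_cases hi : i ∈ c.support
    · exact linearIndependent_iff'.1 hv c.support (fun i ↦ constantCoeff (c i))
        reduction_eq_zero i hi
    · rw [Finsupp.notMem_support_iff.1 hi, map_zero]
  have coeff_eq_zero (n : ℕ) (c : ι →₀ k⟦X⟧) (hc : Finsupp.linearCombination k⟦X⟧ v c = 0)
      (i : ι) : coeff n (c i) = 0 := by
    induction n generalizing c with
    | zero => simpa using constantCoeff_eq_zero c hc i
    | succ n ih =>
      obtain ⟨c', rfl⟩ :=
        exists_eq_X_smul_of_constantCoeff_eq_zero (constantCoeff_eq_zero c hc)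
      rw [map_smul] at hc
      simpa [coeff_succ_X_mul] using ih c' (hX.right_eq_zero_of_smul hc)
  exact linearIndependent_iff.2 fun c hc ↦
    Finsupp.ext fun i ↦ PowerSeries.ext fun n ↦ coeff_eq_zero n c hc i

end Deformation

section LinearIndependence

open PowerSeries

variable {K : Type*} [Field K] [CharZero K]

theorem linearIndependent_orderedMonomial_creation_X :
    LinearIndependent K⟦X⟧ fun m ↦ orderedMonomial (creation (X : K⟦X⟧)) m (vacuum K K⟦X⟧) := by
  let φ : K⟦X⟧ →ₐ[K] K := { (constantCoeff : K⟦X⟧ →+* K) with commutes' := constantCoeff_C }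
  have φ_X : φ X = 0 := constantCoeff_X
  let reduction : (Finset Kˣ → K⟦X⟧) →ₛₗ[constantCoeff (R := K)] (Finset Kˣ → K) :=
    { toFun F := φ ∘ F
      map_add' _ _ := funext fun _ ↦ map_add φ _ _
      map_smul' _ _ := funext fun _ ↦ map_mul φ _ _ }
  have X_regular : IsSMulRegular (Finset Kˣ → K⟦X⟧) (X : K⟦X⟧) :=
    fun F G hFG ↦ funext fun S ↦ X_mul_cancel (congrFun hFG S)
  refine linearIndependent_of_constantCoeff X_regular reduction ?_
  have reduction_monomial : (reduction ∘ fun m ↦ orderedMonomial (creation X) m (vacuum K K⟦X⟧)) =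
      fun m ↦ orderedMonomial (creation (0 : K)) m (vacuum K K) :=
    funext fun _ ↦ φ_X ▸ algHom_comp_prod_creation_vacuum φ X _
  rw [reduction_monomial]
  exact linearIndependent_orderedMonomial_creation_zero

theorem linearIndependent_orderedMonomial {B : Type*} [Ring B] [Algebra K⟦X⟧ B] {x : ℤ → B}
    (ρ : B →ₐ[K⟦X⟧] Module.End K⟦X⟧ (Finset Kˣ → K⟦X⟧))
    (hρ : ∀ n, ρ (x n) = creation (X : K⟦X⟧) n) :
    LinearIndependent K⟦X⟧ (orderedMonomial x) := by
  refine .of_comp (LinearMap.applyₗ (vacuum K K⟦X⟧) ∘ₗ ρ.toLinearMap) ?_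
  convert linearIndependent_orderedMonomial_creation_X (K := K) with m
  have map_orderedMonomial : ρ (orderedMonomial x m) = orderedMonomial (creation X) m := by
    rw [orderedMonomial, map_list_prod, List.map_map, orderedMonomial]
    congr 2
    exact funext hρ
  exact LinearMap.congr_fun map_orderedMonomial _

end LinearIndependence

section CurrentAlgebra

universe u

/-- `B` is the universal `A`-algebra generated by a sequence `x` subject to the current relation
with parameter `h`. Uniqueness in the universal property is encoded by `adjoin_range`. -/
structure IsCurrentAlgebra {A B : Type u} [CommRing A] [Ring B] [Algebra A B] (h : A)
    (x : ℤ → B) : Prop where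
  relation : CurrentRelation h x
  adjoin_range : Algebra.adjoin A (Set.range x) = ⊤
  exists_algHom {C : Type u} [Ring C] [Algebra A C] (y : ℤ → C) (hy : CurrentRelation h y) :
    ∃ f : B →ₐ[A] C, ∀ n, f (x n) = y n

open PowerSeries in
theorem mulMap_ge_lt_bijective_general {K B : Type u} [Field K] [CharZero K] [Ring B]
    [Algebra K⟦X⟧ B] {x : ℤ → B} (hx : IsCurrentAlgebra (X : K⟦X⟧) x) {s : Set ℤ}
    (hs : IsUpperSet s) :
    Function.Bijective (Submodule.mulMap
      (Subalgebra.toSubmodule (Algebra.adjoin K⟦X⟧ (x '' s)))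
      (Subalgebra.toSubmodule (Algebra.adjoin K⟦X⟧ (x '' sᶜ)))) := by
  have two_isUnit : IsUnit (2 : K⟦X⟧) := by
    rw [isUnit_iff_constantCoeff, map_ofNat]
    exact two_ne_zero.isUnit
  have adjoin_eq {J : Set ℤ} (hJ : J.OrdConnected) :=
    hx.relation.toSubmodule_adjoin_image two_isUnit hJ
  obtain ⟨ρ, hρ⟩ := hx.exists_algHom _ (currentRelation_creation (K := K) (X : K⟦X⟧))
  rw [adjoin_eq hs.ordConnected, adjoin_eq hs.compl.ordConnected]
  refine ⟨mulMap_orderedSpan_injective (linearIndependent_orderedMonomial ρ hρ) hs, ?_⟩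
  rw [← LinearMap.range_eq_top, Submodule.mulMap_range, eq_top_iff, ← Algebra.top_toSubmodule,
    ← hx.adjoin_range, ← Set.image_univ, adjoin_eq Set.ordConnected_univ]
  exact orderedSpan_univ_le_mul x hs

end CurrentAlgebra

theorem isCurrentAlgebra_e : IsCurrentAlgebra hbar e where
  relation m n := by
    simpa only [e, map_sub, map_add, map_mul, map_smul] using
      RingQuot.mkAlgHom_rel R (ERel.current m n)
  adjoin_range := by
    have range_e : Set.range e = RingQuot.mkAlgHom R ERel '' Set.range (FreeAlgebra.ι R) :=
      Set.range_comp _ _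
    rw [range_e, ← AlgHom.map_adjoin, FreeAlgebra.adjoin_range_ι, Algebra.map_top,
      AlgHom.range_eq_top]
    exact RingQuot.mkAlgHom_surjective R ERel
  exists_algHom y hy := by
    refine ⟨RingQuot.liftAlgHom R ⟨FreeAlgebra.lift R y, ?_⟩, fun n ↦ ?_⟩
    · rintro _ _ ⟨m, n⟩
      simpa [E] using hy m n
    · simp [e, E]

theorem Uge_eq_adjoin_image : Uge = Algebra.adjoin R (e '' Set.Ici 0) := by
  have range_natCast : Set.range ((↑) : ℕ → ℤ) = Set.Ici 0 := by
    ext n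
    simp only [Set.mem_range, Set.mem_Ici]
    exact ⟨by rintro ⟨k, rfl⟩; exact k.cast_nonneg, fun hn ↦ ⟨n.toNat, Int.toNat_of_nonneg hn⟩⟩
  rw [Uge, ← range_natCast, ← Set.range_comp]
  rfl

theorem Ult_eq_adjoin_image : Ult = Algebra.adjoin R (e '' (Set.Ici 0)ᶜ) := by
  simp only [Ult, Set.compl_Ici, Set.image, Set.mem_Iio, eq_comm]

/-- multiplication induces an isomorphism of `R`-modules
`U^{≥0} ⊗_R U^{<0} → U`. -/
theorem mulMap_ge_lt_bijective :
    Function.Bijective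
      (Submodule.mulMap (Subalgebra.toSubmodule Uge) (Subalgebra.toSubmodule Ult)) := by
  rw [Uge_eq_adjoin_image, Ult_eq_adjoin_image]
  exact mulMap_ge_lt_bijective_general isCurrentAlgebra_e (isUpperSet_Ici 0)

end
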